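/- Let n be a positive integer, and consider the polynomial ring over ℝ in variables x_e indexed by the nonempty subsets e of {1, …, n}, on which the symmetric group Sₙ acts by permuting the indices. Let Ẽ be a linear map from this polynomial ring to ℝ satisfying Ẽ[σ·p] = Ẽ[p] for every polynomial p and every σ ∈ Sₙ. Then for every polynomial g with indexdeg(g) ≤ n/2, there exist a finite family of pairs (I_t, g_t), where each I_t is a subset of {1, …, n} with |I_t| ≤ indexdeg(g) and each g_t is a polynomial, such that: (1) each g_t is invariant under every permutation of {1, …, n} fixing I_t pointwise; (2) indexdeg(g_t) ≤ indexdeg(g); (3) for every i ∈ I_t, Σ_{σ} σ·g_t = 0, where the sum is over all permutations σ of {1, …, n} fixing I_t ∖ {i} pointwise; and (4) Ẽ[g²] = Σ_t Ẽ[g_t²]. -/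

import Mathlib

open MvPolynomial Finset

/-- The index type: nonempty subsets of `{1,…,n}`. -/
abbrev VIdx (n : ℕ) := {e : Finset (Fin n) // e.Nonempty}

/-- The action of a permutation of `{1,…,n}` on the index set. -/
def permIdx {n : ℕ} (σ : Equiv.Perm (Fin n)) (e : VIdx n) : VIdx n :=
  ⟨e.1.image σ, e.2.image σ⟩

/-- The index degree of a polynomial in the variables `x_e`, `e` a nonempty subset of
`{1,…,n}`: the maximum, over monomials in the support, of the number of indices
belonging to some `e` with `x_e` occurring with nonzero exponent. -/
noncomputable def indexDeg {n : ℕ} (p : MvPolynomial (VIdx n) ℝ) : ℕ :=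
  p.support.sup fun d => (d.support.biUnion fun e => (e : Finset (Fin n))).card

/-- Pointwise stabilizer of `J`. -/
def stab {n : ℕ} (J : Finset (Fin n)) : Finset (Equiv.Perm (Fin n)) :=
  univ.filter (fun σ : Equiv.Perm (Fin n) => ∀ j ∈ J, σ j = j)

lemma mem_stab {n : ℕ} {J : Finset (Fin n)} {σ : Equiv.Perm (Fin n)} :
    σ ∈ stab J ↔ ∀ j ∈ J, σ j = j := by simp [stab]

lemma stab_inv {n : ℕ} {J : Finset (Fin n)} {σ : Equiv.Perm (Fin n)} (h : σ ∈ stab J) :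
    σ⁻¹ ∈ stab J := by
  rw [mem_stab] at *
  intro j hj
  rw [Equiv.Perm.inv_eq_iff_eq]
  exact (h j hj).symm

lemma stab_mul {n : ℕ} {J : Finset (Fin n)} {σ τ : Equiv.Perm (Fin n)} (h : σ ∈ stab J)
    (h' : τ ∈ stab J) : σ * τ ∈ stab J := by
  rw [mem_stab] at *
  intro j hj
  rw [Equiv.Perm.mul_apply, h' j hj, h j hj]

lemma stab_card_pos {n : ℕ} (J : Finset (Fin n)) : (0 : ℝ) < (stab J).card := by
  have : (1 : Equiv.Perm (Fin n)) ∈ stab J := by simp [mem_stab]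
  exact_mod_cast Finset.card_pos.mpr ⟨_, this⟩

lemma stab_anti {n : ℕ} {J K : Finset (Fin n)} (h : K ⊆ J) : stab J ⊆ stab K := by
  intro σ hσ
  rw [mem_stab] at *
  exact fun j hj => hσ j (h hj)

section abstractPart

variable {n : ℕ} {V : Type*} [NormedAddCommGroup V] [InnerProductSpace ℝ V]

/-- Sum over the pointwise stabilizer. -/
def Qop (ρ : Equiv.Perm (Fin n) →* (V →ₗ[ℝ] V)) (J : Finset (Fin n)) : V →ₗ[ℝ] V :=
  ∑ σ ∈ stab J, ρ σ

/-- Sum of the `Qop` over all subsets of a given size. -/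
def Tsum (ρ : Equiv.Perm (Fin n) →* (V →ₗ[ℝ] V)) (k : ℕ) : V →ₗ[ℝ] V :=
  ∑ J ∈ powersetCard k (univ : Finset (Fin n)), Qop ρ J

lemma mul_Qop (ρ : Equiv.Perm (Fin n) →* (V →ₗ[ℝ] V)) {J : Finset (Fin n)}
    {σ : Equiv.Perm (Fin n)} (h : σ ∈ stab J) : ρ σ * Qop ρ J = Qop ρ J := by
  unfold Qop
  rw [Finset.mul_sum]
  simp_rw [← map_mul]
  refine Finset.sum_equiv (Equiv.mulLeft σ) ?_ (fun τ _ => rfl)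
  intro τ
  refine ⟨fun h' => stab_mul h h', fun h' => ?_⟩
  simpa using stab_mul (stab_inv h) h'

lemma Qop_mul (ρ : Equiv.Perm (Fin n) →* (V →ₗ[ℝ] V)) {J : Finset (Fin n)}
    {σ : Equiv.Perm (Fin n)} (h : σ ∈ stab J) : Qop ρ J * ρ σ = Qop ρ J := by
  unfold Qop
  rw [Finset.sum_mul]
  simp_rw [← map_mul]
  refine Finset.sum_equiv (Equiv.mulRight σ) ?_ (fun τ _ => rfl)
  intro τ
  refine ⟨fun h' => stab_mul h' h, fun h' => ?_⟩
  simpa using stab_mul h' (stab_inv h)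

lemma Qop_mul_Qop (ρ : Equiv.Perm (Fin n) →* (V →ₗ[ℝ] V)) {J K : Finset (Fin n)}
    (h : K ⊆ J) (v : V) : Qop ρ K (Qop ρ J v) = ((stab J).card : ℝ) • Qop ρ K v := by
  have : Qop ρ K * Qop ρ J = (stab J).card • Qop ρ K := by
    conv_lhs => rw [Qop.eq_1 ρ J]
    rw [Finset.mul_sum, Finset.sum_congr rfl (fun σ hσ => Qop_mul ρ (stab_anti h hσ))]
    simp
  have := congrArg (fun f : V →ₗ[ℝ] V => f v) this
  simpa [Nat.cast_smul_eq_nsmul] using this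

lemma Qop_conj (ρ : Equiv.Perm (Fin n) →* (V →ₗ[ℝ] V)) (J : Finset (Fin n))
    (τ : Equiv.Perm (Fin n)) : ρ τ * Qop ρ J = Qop ρ (J.map τ.toEmbedding) * ρ τ := by
  unfold Qop
  rw [Finset.mul_sum, Finset.sum_mul]
  simp_rw [← map_mul]
  refine Finset.sum_equiv (MulAut.conj τ).toEquiv ?_ ?_
  · intro σ
    simp only [mem_stab, Finset.mem_map]
    constructor
    · rintro h _ ⟨j, hj, rfl⟩
      simp [h j hj]
    · intro h j hj
      simpa using h (τ j) ⟨j, hj, rfl⟩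
  · intro σ _
    simp

lemma Tsum_comm_rho (ρ : Equiv.Perm (Fin n) →* (V →ₗ[ℝ] V)) (k : ℕ)
    (τ : Equiv.Perm (Fin n)) : ρ τ * Tsum ρ k = Tsum ρ k * ρ τ := by
  unfold Tsum
  rw [Finset.mul_sum, Finset.sum_mul]
  refine Finset.sum_equiv τ.finsetCongr ?_ ?_
  · intro J
    simp [mem_powersetCard]
  · intro J _
    exact Qop_conj ρ J τ

lemma Tsum_comm (ρ : Equiv.Perm (Fin n) →* (V →ₗ[ℝ] V)) (k l : ℕ) :
    Commute (Tsum ρ k) (Tsum ρ l) := by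
  conv => arg 1; unfold Tsum Qop
  refine Commute.sum_left _ _ _ fun J _ => Commute.sum_left _ _ _ fun σ _ => Tsum_comm_rho ρ l σ

lemma form_Qop (ρ : Equiv.Perm (Fin n) →* (V →ₗ[ℝ] V)) (B : V →ₗ[ℝ] V →ₗ[ℝ] ℝ)
    (hB : ∀ σ v w, B (ρ σ v) (ρ σ w) = B v w) (J : Finset (Fin n)) (v w : V) :
    B (Qop ρ J v) w = B v (Qop ρ J w) := by
  unfold Qop
  simp only [LinearMap.sum_apply, map_sum]
  refine Finset.sum_equiv (Equiv.inv _) ?_ ?_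
  · intro σ
    refine ⟨fun h => stab_inv h, fun h => ?_⟩
    simpa using stab_inv h
  · intro σ _
    rw [← hB σ⁻¹]
    simp [← Module.End.mul_apply, ← map_mul]

lemma form_Tsum (ρ : Equiv.Perm (Fin n) →* (V →ₗ[ℝ] V)) (B : V →ₗ[ℝ] V →ₗ[ℝ] ℝ)
    (hB : ∀ σ v w, B (ρ σ v) (ρ σ w) = B v w) (k : ℕ) (v w : V) :
    B (Tsum ρ k v) w = B v (Tsum ρ k w) := by
  unfold Tsum
  simp only [LinearMap.sum_apply, map_sum]
  exact Finset.sum_congr rfl fun J _ => form_Qop ρ B hB J v w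

lemma form_Qop_self (ρ : Equiv.Perm (Fin n) →* (V →ₗ[ℝ] V)) (B : V →ₗ[ℝ] V →ₗ[ℝ] ℝ)
    (hB : ∀ σ v w, B (ρ σ v) (ρ σ w) = B v w) (J : Finset (Fin n)) (v : V) :
    B (Qop ρ J v) v = ((stab J).card : ℝ)⁻¹ * B (Qop ρ J v) (Qop ρ J v) := by
  have h := stab_card_pos J
  rw [← form_Qop ρ B hB J, Qop_mul_Qop ρ (subset_refl J)]
  rw [map_smul, LinearMap.smul_apply, smul_eq_mul, inv_mul_cancel_left₀ h.ne']

lemma form_Tsum_self (ρ : Equiv.Perm (Fin n) →* (V →ₗ[ℝ] V)) (B : V →ₗ[ℝ] V →ₗ[ℝ] ℝ)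
    (hB : ∀ σ v w, B (ρ σ v) (ρ σ w) = B v w) (k : ℕ) (v : V) :
    B (Tsum ρ k v) v = ∑ J ∈ powersetCard k (univ : Finset (Fin n)),
      ((stab J).card : ℝ)⁻¹ * B (Qop ρ J v) (Qop ρ J v) := by
  unfold Tsum
  simp only [LinearMap.sum_apply, map_sum]
  exact Finset.sum_congr rfl fun J _ => form_Qop_self ρ B hB J v

theorem abstract_decomp [FiniteDimensional ℝ V] (ρ : Equiv.Perm (Fin n) →* (V →ₗ[ℝ] V))
    (hρ : ∀ σ v w, innerₗ V (ρ σ v) (ρ σ w) = innerₗ V v w)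
    (B : V →ₗ[ℝ] V →ₗ[ℝ] ℝ) (hB : ∀ σ v w, B (ρ σ v) (ρ σ w) = B v w) (d : ℕ)
    (C : AddSubmonoid ℝ) (hC : ∀ c x : ℝ, 0 ≤ c → x ∈ C → c * x ∈ C)
    (hadm : ∀ (J : Finset (Fin n)) (u : V), J.card ≤ d → (∀ σ ∈ stab J, ρ σ u = u) →
      (∀ i ∈ J, Qop ρ (J.erase i) u = 0) → B u u ∈ C)
    (hgen : ∀ v : V, (∀ J : Finset (Fin n), J.card ≤ d → Qop ρ J v = 0) → v = 0) (v : V) :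
    B v v ∈ C := by
  classical
  have key : ∀ (χ : ℕ → ℝ) (h : V), (∀ k, Tsum ρ k h = χ k • h) → B h h ∈ C := by
    intro χ h hh
    by_cases h0 : h = 0
    · simp [h0]
    have hex : ∃ k, ∃ J : Finset (Fin n), J.card = k ∧ k ≤ d ∧ Qop ρ J h ≠ 0 := by
      by_contra! hcon
      exact h0 (hgen h fun J hJ => hcon _ J rfl hJ)
    obtain ⟨J, hJc, hkd, hJ⟩ := Nat.find_spec hex
    have hmin := fun m (hm : m < Nat.find hex) => Nat.find_min hex hm
    set k := Nat.find hex
    have hpos : 0 < χ k := by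
      have h1 := form_Tsum_self ρ (innerₗ V) hρ k h
      rw [hh k, map_smul, LinearMap.smul_apply, smul_eq_mul] at h1
      have h2 : 0 < χ k * innerₗ V h h := by
        rw [h1]
        refine Finset.sum_pos' (fun K _ => ?_) ⟨J, by simp [mem_powersetCard, hJc], ?_⟩
        · have := stab_card_pos K
          have h3 : 0 ≤ innerₗ V (Qop ρ K h) (Qop ρ K h) := real_inner_self_nonneg
          positivity
        · have := stab_card_pos J
          have h3 : 0 < innerₗ V (Qop ρ J h) (Qop ρ J h) := real_inner_self_pos.mpr hJ
          positivity
      have h3 : 0 < innerₗ V h h := real_inner_self_pos.mpr h0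
      exact pos_of_mul_pos_left h2 h3.le
    have h1 := form_Tsum_self ρ B hB k h
    rw [hh k, map_smul, LinearMap.smul_apply, smul_eq_mul] at h1
    have h2 : B h h = (χ k)⁻¹ * (χ k * B h h) := by field_simp
    rw [h2, h1]
    refine hC _ _ (inv_nonneg.mpr hpos.le) (C.sum_mem fun K hK => ?_)
    rw [mem_powersetCard] at hK
    refine hC _ _ (inv_nonneg.mpr (stab_card_pos K).le) (hadm K _ (hK.2.trans_le hkd) ?_ ?_)
    · intro σ hσ
      exact congrArg (fun f : V →ₗ[ℝ] V => f h) (mul_Qop ρ hσ)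
    · intro i hi
      rw [Qop_mul_Qop ρ (Finset.erase_subset i K)]
      have hlt : (K.erase i).card < k := by
        rw [← hK.2]; exact Finset.card_erase_lt_of_mem hi
      have := hmin _ hlt
      push Not at this
      rw [this _ rfl (hlt.le.trans hkd), smul_zero]
  have htop := LinearMap.IsSymmetric.iSup_iInf_eq_top_of_commute (𝕜 := ℝ) (T := Tsum ρ)
    (fun k v w => form_Tsum ρ (innerₗ V) hρ k v w) (fun k l _ => Tsum_comm ρ k l)
  have hv : v ∈ ⨆ χ : ℕ → ℝ, ⨅ i, Module.End.eigenspace (Tsum ρ i) (χ i) := htop ▸ Submodule.mem_top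
  rw [Submodule.mem_iSup_iff_exists_finsupp] at hv
  obtain ⟨f, hf, rfl⟩ := hv
  simp only [Submodule.mem_iInf, Module.End.mem_eigenspace_iff] at hf
  have horth : ∀ χ ψ, χ ≠ ψ → B (f χ) (f ψ) = 0 := by
    intro χ ψ hne
    obtain ⟨k, hk⟩ := Function.ne_iff.mp hne
    have := form_Tsum ρ B hB k (f χ) (f ψ)
    rw [hf, hf, map_smul, map_smul, LinearMap.smul_apply, smul_eq_mul, smul_eq_mul] at this
    have h2 : (χ k - ψ k) * B (f χ) (f ψ) = 0 := by linarith
    exact (mul_eq_zero.mp h2).resolve_left (sub_ne_zero.mpr hk)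
  have : B (f.sum fun _ x => x) (f.sum fun _ x => x) = ∑ χ ∈ f.support, B (f χ) (f χ) := by
    unfold Finsupp.sum
    simp only [map_sum, LinearMap.sum_apply]
    refine Finset.sum_congr rfl fun χ hχ => ?_
    exact Finset.sum_eq_single_of_mem χ hχ fun ψ _ hne => horth _ _ hne
  rw [this]
  exact C.sum_mem fun χ _ => key χ _ (hf χ)

end abstractPart
section concretePart

variable {n : ℕ}

lemma permIdx_one : permIdx (1 : Equiv.Perm (Fin n)) = id := by
  funext e
  apply Subtype.ext
  simp [permIdx]

lemma permIdx_mul (σ τ : Equiv.Perm (Fin n)) : permIdx (σ * τ) = permIdx σ ∘ permIdx τ := by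
  funext e
  apply Subtype.ext
  simp [permIdx, Finset.image_image]

lemma permIdx_injective (σ : Equiv.Perm (Fin n)) : Function.Injective (permIdx σ) := by
  refine Function.LeftInverse.injective (g := permIdx σ⁻¹) fun e => ?_
  have := congrFun (permIdx_mul σ⁻¹ σ) e
  rw [inv_mul_cancel, permIdx_one] at this
  exact this.symm

/-- The set of indices of a monomial. -/
def midx (m : VIdx n →₀ ℕ) : Finset (Fin n) :=
  m.support.biUnion fun e => (e : Finset (Fin n))

lemma midx_mapDomain (σ : Equiv.Perm (Fin n)) (m : VIdx n →₀ ℕ) :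
    midx (m.mapDomain (permIdx σ)) = (midx m).image σ := by
  classical
  unfold midx
  rw [Finsupp.mapDomain_support_of_injective (permIdx_injective σ)]
  ext i
  simp only [Finset.mem_biUnion, Finset.mem_image]
  constructor
  · rintro ⟨_, ⟨e, he, rfl⟩, hi⟩
    obtain ⟨j, hj, rfl⟩ := Finset.mem_image.mp hi
    exact ⟨j, ⟨e, he, hj⟩, rfl⟩
  · rintro ⟨j, ⟨e, he, hj⟩, rfl⟩
    exact ⟨_, ⟨e, he, rfl⟩, Finset.mem_image_of_mem _ hj⟩

lemma mapDomain_of_stab (σ : Equiv.Perm (Fin n)) (m : VIdx n →₀ ℕ) (h : σ ∈ stab (midx m)) :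
    m.mapDomain (permIdx σ) = m := by
  classical
  rw [mem_stab] at h
  have : m.mapDomain (permIdx σ) = m.mapDomain id := by
    refine Finsupp.mapDomain_congr fun e he => Subtype.ext ?_
    change e.1.image σ = e.1
    have h2 : ∀ i ∈ e.1, σ i = i := fun i hi => h i (Finset.mem_biUnion.mpr ⟨e, he, hi⟩)
    rw [Finset.image_congr (g := id) (fun i hi => h2 i hi), Finset.image_id]
  rw [this, Finsupp.mapDomain_id]

/-- The monomials in the orbit of the support of `g`. -/
def Mon (g : MvPolynomial (VIdx n) ℝ) : Type :=
  {m : VIdx n →₀ ℕ // ∃ σ : Equiv.Perm (Fin n), ∃ m₀ ∈ g.support, m₀.mapDomain (permIdx σ) = m}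

instance (g : MvPolynomial (VIdx n) ℝ) : Finite (Mon g) := by
  refine Set.Finite.subset (s := Set.image (fun x : Equiv.Perm (Fin n) × (VIdx n →₀ ℕ) =>
    x.2.mapDomain (permIdx x.1)) (Set.univ ×ˢ (g.support : Set _))) ?_ ?_
  · exact (Set.finite_univ.prod g.support.finite_toSet).image _
  · rintro m ⟨σ, m₀, hm, rfl⟩
    exact ⟨(σ, m₀), ⟨trivial, hm⟩, rfl⟩

noncomputable instance (g : MvPolynomial (VIdx n) ℝ) : Fintype (Mon g) := Fintype.ofFinite _

noncomputable instance (g : MvPolynomial (VIdx n) ℝ) : MulAction (Equiv.Perm (Fin n)) (Mon g) where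
  smul σ m := ⟨m.1.mapDomain (permIdx σ), by
    obtain ⟨τ, m₀, hm, h⟩ := m.2
    exact ⟨σ * τ, m₀, hm, by rw [permIdx_mul, Finsupp.mapDomain_comp, h]⟩⟩
  one_smul m := Subtype.ext (by
    change m.1.mapDomain (permIdx 1) = m.1
    rw [permIdx_one, Finsupp.mapDomain_id])
  mul_smul σ τ m := Subtype.ext (by
    change m.1.mapDomain (permIdx (σ * τ)) = (m.1.mapDomain (permIdx τ)).mapDomain (permIdx σ)
    rw [permIdx_mul, Finsupp.mapDomain_comp])

lemma Mon.smul_val {g : MvPolynomial (VIdx n) ℝ} (σ : Equiv.Perm (Fin n)) (m : Mon g) :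
    (σ • m).1 = m.1.mapDomain (permIdx σ) := rfl

lemma Mon.card_le {g : MvPolynomial (VIdx n) ℝ} (m : Mon g) : (midx m.1).card ≤ indexDeg g := by
  obtain ⟨m, σ, m₀, hm, rfl⟩ := m
  rw [midx_mapDomain, Finset.card_image_of_injective _ σ.injective]
  exact Finset.le_sup (f := fun d => (midx d).card) hm

/-- The permutation representation on functions on a `Perm`-set. -/
noncomputable def permRep (S : Type) [Fintype S] [MulAction (Equiv.Perm (Fin n)) S] :
    Equiv.Perm (Fin n) →* (EuclideanSpace ℝ S →ₗ[ℝ] EuclideanSpace ℝ S) where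
  toFun σ :=
    { toFun := fun v => WithLp.toLp 2 fun s => v (σ⁻¹ • s)
      map_add' := fun v w => by ext s; simp
      map_smul' := fun c v => by ext s; simp }
  map_one' := by ext v s; simp
  map_mul' σ τ := by
    refine LinearMap.ext fun v => ?_
    ext s
    simp [mul_smul]

lemma permRep_apply (S : Type) [Fintype S] [MulAction (Equiv.Perm (Fin n)) S]
    (σ : Equiv.Perm (Fin n)) (v : EuclideanSpace ℝ S) (s : S) :
    permRep S σ v s = v (σ⁻¹ • s) := rfl

lemma permRep_inner (S : Type) [Fintype S] [MulAction (Equiv.Perm (Fin n)) S]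
    (σ : Equiv.Perm (Fin n)) (v w : EuclideanSpace ℝ S) :
    innerₗ _ (permRep S σ v) (permRep S σ w) = innerₗ _ v w := by
  simp only [innerₗ_apply_apply, PiLp.inner_apply, permRep_apply]
  exact Equiv.sum_comp (MulAction.toPerm σ⁻¹) (fun s => inner ℝ (v s) (w s))

/-- The polynomial with given coefficients. -/
noncomputable def toPoly (g : MvPolynomial (VIdx n) ℝ) :
    EuclideanSpace ℝ (Mon g) →ₗ[ℝ] MvPolynomial (VIdx n) ℝ where
  toFun v := ∑ s : Mon g, monomial s.1 (v s)
  map_add' v w := by simp [Finset.sum_add_distrib]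
  map_smul' c v := by simp [Finset.smul_sum, smul_monomial]

lemma toPoly_apply (g : MvPolynomial (VIdx n) ℝ) (v : EuclideanSpace ℝ (Mon g)) :
    toPoly g v = ∑ s : Mon g, monomial s.1 (v s) := rfl

lemma toPoly_permRep (g : MvPolynomial (VIdx n) ℝ) (σ : Equiv.Perm (Fin n))
    (v : EuclideanSpace ℝ (Mon g)) :
    toPoly g (permRep _ σ v) = rename (permIdx σ) (toPoly g v) := by
  rw [toPoly_apply, toPoly_apply, map_sum,
    ← Equiv.sum_comp (MulAction.toPerm σ : Equiv.Perm (Mon g))]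
  refine Finset.sum_congr rfl fun s _ => ?_
  rw [rename_monomial, MulAction.toPerm_apply, permRep_apply, inv_smul_smul, Mon.smul_val]

lemma indexDeg_toPoly (g : MvPolynomial (VIdx n) ℝ) (v : EuclideanSpace ℝ (Mon g)) :
    indexDeg (toPoly g v) ≤ indexDeg g := by
  classical
  refine Finset.sup_le fun m hm => ?_
  have := MvPolynomial.support_sum hm
  obtain ⟨s, _, hs⟩ := Finset.mem_biUnion.mp this
  have h := support_monomial_subset hs
  rw [Finset.mem_singleton] at h
  subst h
  exact s.card_le

lemma toPoly_coeff (g : MvPolynomial (VIdx n) ℝ) :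
    toPoly g (WithLp.toLp 2 fun s => coeff s.1 g) = g := by
  classical
  rw [toPoly_apply]
  ext m
  rw [coeff_sum]
  simp only [coeff_monomial]
  by_cases h : m ∈ g.support
  · let s₀ : Mon g := ⟨m, 1, m, h, by rw [permIdx_one, Finsupp.mapDomain_id]⟩
    rw [Finset.sum_eq_single s₀]
    · exact if_pos rfl
    · intro s _ hs
      exact if_neg fun h' => hs (Subtype.ext h')
    · intro h'
      exact absurd (Finset.mem_univ _) h'
  · rw [notMem_support_iff.mp h]
    refine Finset.sum_eq_zero fun s _ => ?_
    split_ifs with h'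
    · rw [h']
      exact notMem_support_iff.mp h
    · rfl

theorem hgen_concrete (g : MvPolynomial (VIdx n) ℝ) (v : EuclideanSpace ℝ (Mon g))
    (h : ∀ J : Finset (Fin n), J.card ≤ indexDeg g → Qop (permRep (Mon g)) J v = 0) : v = 0 := by
  ext s
  have h1 := congrArg (fun w : EuclideanSpace ℝ (Mon g) => w s) (h (midx s.1) s.card_le)
  have h2 : ∀ σ ∈ stab (midx s.1), permRep (Mon g) σ v s = v s := by
    intro σ hσ
    rw [permRep_apply]
    have h3 : σ⁻¹ • s = s := Subtype.ext (mapDomain_of_stab _ _ (stab_inv hσ))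
    rw [h3]
  simp only [Qop, LinearMap.sum_apply, WithLp.ofLp_sum, Finset.sum_apply] at h1
  rw [Finset.sum_congr rfl h2] at h1
  have := (stab_card_pos (midx s.1)).ne'
  simpa [this] using h1

end concretePart

theorem symmetric_square_decomposition (n : ℕ) (hn : 0 < n)
    (E : MvPolynomial (VIdx n) ℝ →ₗ[ℝ] ℝ)
    (hsym : ∀ (σ : Equiv.Perm (Fin n)) (p : MvPolynomial (VIdx n) ℝ),
      E (rename (permIdx σ) p) = E p)
    (g : MvPolynomial (VIdx n) ℝ) (hg : 2 * indexDeg g ≤ n) :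
    ∃ (m : ℕ) (I : Fin m → Finset (Fin n)) (gs : Fin m → MvPolynomial (VIdx n) ℝ),
      (∀ t, (I t).card ≤ indexDeg g) ∧
      (∀ t (σ : Equiv.Perm (Fin n)), (∀ i ∈ I t, σ i = i) →
        rename (permIdx σ) (gs t) = gs t) ∧
      (∀ t, indexDeg (gs t) ≤ indexDeg g) ∧
      (∀ t, ∀ i ∈ I t,
        ∑ σ ∈ univ.filter (fun σ : Equiv.Perm (Fin n) => ∀ j ∈ (I t).erase i, σ j = j),
          rename (permIdx σ) (gs t) = 0) ∧
      E (g ^ 2) = ∑ t, E (gs t ^ 2) := by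
  classical
  let A : Set ℝ := {c | ∃ (J : Finset (Fin n)) (u : EuclideanSpace ℝ (Mon g)),
    J.card ≤ indexDeg g ∧ (∀ σ ∈ stab J, permRep (Mon g) σ u = u) ∧
    (∀ i ∈ J, Qop (permRep (Mon g)) (J.erase i) u = 0) ∧ E (toPoly g u ^ 2) = c}
  let B : EuclideanSpace ℝ (Mon g) →ₗ[ℝ] EuclideanSpace ℝ (Mon g) →ₗ[ℝ] ℝ :=
    ((LinearMap.mul ℝ (MvPolynomial (VIdx n) ℝ)).compl₁₂ (toPoly g) (toPoly g)).compr₂ E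
  have hBdef : ∀ v w, B v w = E (toPoly g v * toPoly g w) := fun v w => rfl
  have main := abstract_decomp (permRep (Mon g)) (permRep_inner (Mon g)) B
    (fun σ v w => by
      rw [hBdef, hBdef, toPoly_permRep, toPoly_permRep, ← map_mul, hsym]) (indexDeg g)
    (AddSubmonoid.closure A)
    (fun c x hc hx => by
      induction hx using AddSubmonoid.closure_induction with
      | mem x hx =>
        obtain ⟨J, u, h1, h2, h3, rfl⟩ := hx
        refine AddSubmonoid.subset_closure ⟨J, Real.sqrt c • u, h1, ?_, ?_, ?_⟩
        · intro σ hσ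
          rw [map_smul, h2 σ hσ]
        · intro i hi
          rw [map_smul, h3 i hi, smul_zero]
        · rw [map_smul, smul_pow, Real.sq_sqrt hc, map_smul, smul_eq_mul]
      | zero => simp
      | add x y _ _ hx hy => rw [mul_add]; exact add_mem hx hy)
    (fun J u h1 h2 h3 => AddSubmonoid.subset_closure ⟨J, u, h1, h2, h3, by rw [hBdef, sq]⟩)
    (hgen_concrete g) (WithLp.toLp 2 fun s => coeff s.1 g)
  rw [hBdef, toPoly_coeff, ← sq] at main
  obtain ⟨l, hl, hsum⟩ := AddSubmonoid.exists_list_of_mem_closure main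
  have hl' : ∀ t : Fin l.length, l.get t ∈ A := fun t => hl _ (List.get_mem l t)
  choose I u h1 h2 h3 h4 using hl'
  refine ⟨l.length, I, fun t => toPoly g (u t), h1, ?_, fun t => indexDeg_toPoly g _, ?_, ?_⟩
  · intro t σ hσ
    rw [← toPoly_permRep, h2 t σ (mem_stab.mpr hσ)]
  · intro t i hi
    have h := congrArg (toPoly g) (h3 t i hi)
    simp only [Qop, LinearMap.sum_apply, map_sum, toPoly_permRep, map_zero] at h
    exact h
  · rw [← hsum, Finset.sum_congr rfl fun t _ => h4 t]
    simp
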